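/- (Robust self-testing of the weighted CHSH inequality.) There is a universal constant K > 0 with the following property. Let α > 0, μ = arctan(1/α) ∈ (0, π/2), and ε ≥ 0. Let H_A, H_B be finite-dimensional complex Hilbert spaces, M₁, M₂ self-adjoint operators on H_A with M₁² = M₂² = 1, N₁, N₂ self-adjoint operators on H_B with N₁² = N₂² = 1, and ψ ∈ H_A ⊗ H_B a unit vector with ⟨ψ, (α M₁⊗N₁ + α M₁⊗N₂ + M₂⊗N₁ − M₂⊗N₂)ψ⟩ ≥ 2√(1+α²) − ε. Then there exist finite-dimensional complex Hilbert spaces K_A, K_B, linear isometries V_A : H_A → ℂ² ⊗ K_A and V_B : H_B → ℂ² ⊗ K_B, and a unit vector junk ∈ K_A ⊗ K_B such that, identifying (ℂ² ⊗ K_A) ⊗ (ℂ² ⊗ K_B) with (ℂ² ⊗ ℂ²) ⊗ (K_A ⊗ K_B), for all x, y ∈ {0, 1, 2}: ‖(V_A ⊗ V_B)((M_x ⊗ N_y)ψ) − ((M̃_x ⊗ Ñ_y)|EPR⟩) ⊗ junk‖ ≤ K·(1/(cos²(μ)·sin(μ)^{1/2}) + 1/sin(μ)^{3/2})·√ε,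 where M₀, N₀, M̃₀, Ñ₀ denote identity operators, M̃₁ = σ_z, M̃₂ = σ_x, Ñ₁ = cos(μ)σ_z + sin(μ)σ_x, Ñ₂ = cos(μ)σ_z − sin(μ)σ_x. -/

import Mathlib

open Matrix Kronecker

/-- The action of a matrix on a vector of the corresponding Euclidean (Hilbert) space. -/
noncomputable def mApply {ι κ : Type*} [Fintype ι] (A : Matrix κ ι ℂ) (v : EuclideanSpace ℂ ι) :
    EuclideanSpace ℂ κ :=
  (WithLp.equiv 2 (κ → ℂ)).symm (A.mulVec (WithLp.equiv 2 (ι → ℂ) v))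

/-!
Put `c = cos μ`, `s = sin μ`. The squares `‖(c M₁ + s M₂ - N₁) ψ‖²` and `‖(c M₁ - s M₂ - N₂) ψ‖²`
add up to `4` minus `2 s` times the weighted CHSH value, so both residuals are at most
`√(2 ε s) =: c s η`. Taking signs of `N₁ + N₂` and `N₁ - N₂` turns `M₁` and `M₂`, as seen from Bob's
side, into genuine binary observables `Z` and `X`, at a cost of order `η`, and `c² + s² = 1` forces
both pairs to anticommute up to order `η`. The swap isometry built from a nearly anticommuting pair
nearly intertwines it with `σ_z`, `σ_x`; the image of `ψ` is hence almost fixed by `σ_z ⊗ σ_z` and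
`σ_x ⊗ σ_x`, whose common fixed vectors are `|EPR⟩ ⊗ junk`.
-/

namespace WeightedCHSH

section Vectors

variable {𝕜 E : Type*} [RCLike 𝕜] [NormedAddCommGroup E] [InnerProductSpace 𝕜 E] {c s : ℝ}

/-- The sum-of-squares decomposition of the weighted CHSH operator. -/
lemma sum_sq_norm_tilted_sub (hcs : c ^ 2 + s ^ 2 = 1) {m₁ m₂ n₁ n₂ : E} (hm₁ : ‖m₁‖ = 1)
    (hm₂ : ‖m₂‖ = 1) (hn₁ : ‖n₁‖ = 1) (hn₂ : ‖n₂‖ = 1) :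
    ‖(c : 𝕜) • m₁ + (s : 𝕜) • m₂ - n₁‖ ^ 2 + ‖(c : 𝕜) • m₁ - (s : 𝕜) • m₂ - n₂‖ ^ 2
      = 4 - 2 * RCLike.re ((c : 𝕜) * inner 𝕜 m₁ n₁ + (c : 𝕜) * inner 𝕜 m₁ n₂
        + (s : 𝕜) * inner 𝕜 m₂ n₁ - (s : 𝕜) * inner 𝕜 m₂ n₂) := by
  have hpar := parallelogram_law_with_norm 𝕜 ((c : 𝕜) • m₁) ((s : 𝕜) • m₂)
  simp only [norm_smul, RCLike.norm_ofReal, hm₁, hm₂, mul_one, sq_abs, hcs] at hpar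
  rw [@norm_sub_sq 𝕜 _ _ _ _ (_ + _), @norm_sub_sq 𝕜 _ _ _ _ (_ - _) n₂, inner_add_left,
    inner_sub_left, hn₁, hn₂]
  simp only [inner_smul_left, RCLike.conj_ofReal, map_add, map_sub, RCLike.re_ofReal_mul]
  linarith

lemma norm_tilted_sub_le_sqrt (hcs : c ^ 2 + s ^ 2 = 1) {ε : ℝ} {m₁ m₂ n₁ n₂ : E}
    (hm₁ : ‖m₁‖ = 1) (hm₂ : ‖m₂‖ = 1) (hn₁ : ‖n₁‖ = 1) (hn₂ : ‖n₂‖ = 1)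
    (hvalue : 2 - ε * s ≤ RCLike.re ((c : 𝕜) * inner 𝕜 m₁ n₁ + (c : 𝕜) * inner 𝕜 m₁ n₂
        + (s : 𝕜) * inner 𝕜 m₂ n₁ - (s : 𝕜) * inner 𝕜 m₂ n₂)) :
    ‖(c : 𝕜) • m₁ + (s : 𝕜) • m₂ - n₁‖ ≤ √(2 * ε * s) ∧
      ‖(c : 𝕜) • m₁ - (s : 𝕜) • m₂ - n₂‖ ≤ √(2 * ε * s) := by
  have hsum := sum_sq_norm_tilted_sub (𝕜 := 𝕜) hcs hm₁ hm₂ hn₁ hn₂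
  constructor <;> refine Real.le_sqrt_of_sq_le ?_ <;> nlinarith

lemma norm_sub_tilted_le (hc : |c| ≤ 1) (hs : |s| ≤ 1) (m₁ m₂ n z x : E) :
    ‖n - ((c : 𝕜) • z + (s : 𝕜) • x)‖
      ≤ ‖(c : 𝕜) • m₁ + (s : 𝕜) • m₂ - n‖ + ‖z - m₁‖ + ‖x - m₂‖ := by
  have split : n - ((c : 𝕜) • z + (s : 𝕜) • x)
      = -((c : 𝕜) • m₁ + (s : 𝕜) • m₂ - n) - (c : 𝕜) • (z - m₁) - (s : 𝕜) • (x - m₂) := by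
    module
  have shrink {r : ℝ} (hr : |r| ≤ 1) (v : E) : ‖(r : 𝕜) • v‖ ≤ ‖v‖ := by
    rw [norm_smul, RCLike.norm_ofReal]
    exact mul_le_of_le_one_left (norm_nonneg v) hr
  rw [split]
  refine (norm_sub_le _ _).trans (add_le_add ((norm_sub_le _ _).trans (add_le_add ?_ ?_)) ?_)
  · rw [norm_neg]
  · exact shrink hc _
  · exact shrink hs _

end Vectors

/-- A binary observable: a self-adjoint involution, i.e. the difference of the two projections of
a projective measurement with outcomes `±1`. -/
structure IsBinaryObservable {R : Type*} [Mul R] [One R] [Star R] (a : R) : Prop where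
  isSelfAdjoint : IsSelfAdjoint a
  mul_self : a * a = 1

namespace IsBinaryObservable

lemma one {R : Type*} [Monoid R] [StarMul R] : IsBinaryObservable (1 : R) :=
  ⟨.one R, one_mul 1⟩

lemma mul {R : Type*} [Monoid R] [StarMul R] {a b : R} (ha : IsBinaryObservable a)
    (hb : IsBinaryObservable b) (hab : Commute a b) : IsBinaryObservable (a * b) where
  isSelfAdjoint := (ha.isSelfAdjoint.commute_iff hb.isSelfAdjoint).1 hab
  mul_self := by rw [hab.symm.mul_mul_mul_comm, ha.mul_self, hb.mul_self, one_mul]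

lemma map {R S F : Type*} [Monoid R] [Star R] [Monoid S] [Star S] [FunLike F R S]
    [MonoidHomClass F R S] [StarHomClass F R S] {a : R} (ha : IsBinaryObservable a) (f : F) :
    IsBinaryObservable (f a) where
  isSelfAdjoint := ha.isSelfAdjoint.map f
  mul_self := by rw [← map_mul, ha.mul_self, map_one]

end IsBinaryObservable

/-- `z` is a sign of `s`: a binary observable with `z * s = |s|`. On the kernel of `s` the choice
of signs is free. -/
structure IsSign {R : Type*} [MulZeroOneClass R] [Star R] [PartialOrder R] (s z : R) : Prop where
  isBinaryObservable : IsBinaryObservable z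
  commute : Commute z s
  nonneg : 0 ≤ z * s

namespace IsSign

lemma map {R S F : Type*} [Ring R] [StarRing R] [PartialOrder R] [Ring S] [StarRing S]
    [PartialOrder S] [FunLike F R S] [RingHomClass F R S] [StarHomClass F R S]
    [OrderHomClass F R S] {s z : R} (h : IsSign s z) (f : F) : IsSign (f s) (f z) where
  isBinaryObservable := h.isBinaryObservable.map f
  commute := h.commute.map f
  nonneg := by
    rw [← map_mul]
    exact map_nonneg f h.nonneg

end IsSign

lemma exists_isSign {R : Type*} [Ring R] [StarRing R] [PartialOrder R] [StarOrderedRing R]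
    [TopologicalSpace R] [Algebra ℝ R] [ContinuousFunctionalCalculus ℝ R IsSelfAdjoint] {a : R}
    (ha : IsSelfAdjoint a) (hfin : (spectrum ℝ a).Finite) : ∃ z, IsSign a z := by
  let sgn : ℝ → ℝ := fun x ↦ if 0 ≤ x then 1 else -1
  have hsgn : ContinuousOn sgn (spectrum ℝ a) := hfin.continuousOn sgn
  refine ⟨cfc sgn a, ⟨cfc_predicate sgn a, ?_⟩, ?_, ?_⟩
  · have sgn_mul_sgn (x : ℝ) : sgn x * sgn x = 1 := by grind
    rw [← cfc_mul sgn sgn a]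
    simp only [sgn_mul_sgn, cfc_const_one ℝ a]
  · simpa only [cfc_id ℝ a] using cfc_commute_cfc sgn id a
  · have sgn_mul_nonneg (x : ℝ) : 0 ≤ sgn x * x := by
      by_cases hx : 0 ≤ x
      · simpa only [sgn, if_pos hx, one_mul] using hx
      · simpa only [sgn, if_neg hx, neg_one_mul, neg_nonneg] using (not_le.1 hx).le
    have hmul := cfc_mul sgn id a
    rw [cfc_id ℝ a] at hmul
    rw [← hmul]
    exact cfc_nonneg fun x _ ↦ sgn_mul_nonneg x

section Operators

variable {𝕜 E : Type*} [RCLike 𝕜] [NormedAddCommGroup E] [InnerProductSpace 𝕜 E]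

lemma apply_apply_comm {A B : E →L[𝕜] E} (h : Commute A B) (v : E) :
    A (B v) = B (A v) :=
  congr($h.eq v)

variable [CompleteSpace E]

namespace IsBinaryObservable

variable {A : E →L[𝕜] E}

lemma apply_apply (hA : IsBinaryObservable A) (v : E) : A (A v) = v :=
  congr($hA.mul_self v)

lemma inner_map_left (hA : IsBinaryObservable A) (v w : E) :
    inner 𝕜 (A v) w = inner 𝕜 v (A w) :=
  hA.isSelfAdjoint.isSymmetric v w

lemma norm_map (hA : IsBinaryObservable A) (v : E) : ‖A v‖ = ‖v‖ := by
  rw [← sq_eq_sq₀ (norm_nonneg _) (norm_nonneg _), ← inner_self_eq_norm_sq (𝕜 := 𝕜),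
    hA.inner_map_left, hA.apply_apply, inner_self_eq_norm_sq]

end IsBinaryObservable

lemma norm_smul_sub_le_of_nonneg {T W : E →L[𝕜] E} (hT : 0 ≤ T)
    (hW : IsBinaryObservable W) (hWT : Commute W T) {r : ℝ} (hr : 0 ≤ r) (ψ : E) :
    ‖(r : 𝕜) • ψ - T ψ‖ ≤ ‖(r : 𝕜) • W ψ - T ψ‖ := by
  have expand (φ : E) : ‖(r : 𝕜) • φ - T ψ‖ ^ 2
      = (r * ‖φ‖) ^ 2 - 2 * (r * RCLike.re (inner 𝕜 (T ψ) φ)) + ‖T ψ‖ ^ 2 := by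
    rw [@norm_sub_sq 𝕜, norm_smul, RCLike.norm_ofReal, abs_of_nonneg hr, inner_re_symm,
      inner_smul_right, RCLike.re_ofReal_mul]
  have overlap_le : RCLike.re (inner 𝕜 (T ψ) (W ψ)) ≤ RCLike.re (inner 𝕜 (T ψ) ψ) := by
    have h := (T.nonneg_iff_isPositive.1 hT).re_inner_nonneg_left (ψ - W ψ)
    rw [map_sub, inner_sub_left, inner_sub_right, inner_sub_right, ← apply_apply_comm hWT,
      hW.inner_map_left, hW.inner_map_left, hW.apply_apply] at h
    simp only [map_sub] at h
    linarith
  rw [← sq_le_sq₀ (norm_nonneg _) (norm_nonneg _), expand, expand, hW.norm_map]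
  gcongr

namespace IsSign

variable {S Z M : E →L[𝕜] E}

lemma norm_smul_sub_le (h : IsSign S Z) (hM : IsBinaryObservable M) (hMS : Commute M S)
    (hMZ : Commute M Z) {r : ℝ} (hr : 0 ≤ r) (ψ : E) :
    ‖(r : 𝕜) • Z ψ - S ψ‖ ≤ ‖(r : 𝕜) • M ψ - S ψ‖ := by
  have hZ := h.isBinaryObservable
  have pull (φ : E) : ‖(r : 𝕜) • φ - S ψ‖ = ‖(r : 𝕜) • Z φ - (Z * S) ψ‖ := by
    rw [← hZ.norm_map, map_sub, map_smul, mul_apply_eq_comp]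
  have commute_abs : Commute (Z * M) (Z * S) :=
    .mul_left (.mul_right (.refl Z) h.commute) (.mul_right hMZ hMS)
  rw [pull (Z ψ), pull (M ψ), hZ.apply_apply]
  exact norm_smul_sub_le_of_nonneg h.nonneg (hZ.mul hM hMZ.symm) commute_abs hr ψ

lemma norm_map_sub_map_le (h : IsSign S Z) (hM : IsBinaryObservable M) (hMS : Commute M S)
    (hMZ : Commute M Z) {r η : ℝ} (hr : 0 < r) {ψ : E} (hη : ‖(r : 𝕜) • M ψ - S ψ‖ ≤ r * η) :
    ‖Z ψ - M ψ‖ ≤ 2 * η := by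
  refine le_of_mul_le_mul_left ?_ hr
  calc r * ‖Z ψ - M ψ‖ = ‖((r : 𝕜) • Z ψ - S ψ) - ((r : 𝕜) • M ψ - S ψ)‖ := by
        rw [sub_sub_sub_cancel_right, ← smul_sub, norm_smul, RCLike.norm_ofReal, abs_of_pos hr]
    _ ≤ ‖(r : 𝕜) • Z ψ - S ψ‖ + ‖(r : 𝕜) • M ψ - S ψ‖ := norm_sub_le _ _
    _ ≤ r * (2 * η) := by
        linarith [h.norm_smul_sub_le hM hMS hMZ hr.le ψ]

end IsSign

/-- With `v = (c M₁ + s M₂ - N) ψ`, the involutions and `c² + s² = 1` collapse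
`(c M₁ + s M₂ + N) v` to `c s (M₁ M₂ + M₂ M₁) ψ`. -/
lemma mul_norm_anticommutator_le {c s : ℝ} (hc : 0 ≤ c) (hs : 0 ≤ s) (hcs : c ^ 2 + s ^ 2 = 1)
    {M₁ M₂ N : E →L[𝕜] E} (hM₁ : IsBinaryObservable M₁) (hM₂ : IsBinaryObservable M₂)
    (hN : IsBinaryObservable N) (hM₁N : Commute M₁ N) (hM₂N : Commute M₂ N) (ψ : E) :
    c * s * ‖M₁ (M₂ ψ) + M₂ (M₁ ψ)‖ ≤ 3 * ‖(c : 𝕜) • M₁ ψ + (s : 𝕜) • M₂ ψ - N ψ‖ := by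
  set v := (c : 𝕜) • M₁ ψ + (s : 𝕜) • M₂ ψ - N ψ with hv
  have hcs' : (c : 𝕜) ^ 2 + (s : 𝕜) ^ 2 = 1 := by exact_mod_cast congrArg ((↑) : ℝ → 𝕜) hcs
  have factor : (c : 𝕜) • M₁ v + (s : 𝕜) • M₂ v + N v
      = ((c * s : ℝ) : 𝕜) • (M₁ (M₂ ψ) + M₂ (M₁ ψ)) := by
    have expand : (c : 𝕜) • M₁ v + (s : 𝕜) • M₂ v + N v
        = ((c * s : ℝ) : 𝕜) • (M₁ (M₂ ψ) + M₂ (M₁ ψ)) + ((c : 𝕜) ^ 2 + (s : 𝕜) ^ 2 - 1) • ψ := by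
      simp only [hv, map_add, map_sub, map_smul, hM₁.apply_apply, hM₂.apply_apply, hN.apply_apply,
        apply_apply_comm hM₁N, apply_apply_comm hM₂N, RCLike.ofReal_mul]
      module
    rw [expand, hcs', sub_self, zero_smul, add_zero]
  calc c * s * ‖M₁ (M₂ ψ) + M₂ (M₁ ψ)‖
      = ‖(c : 𝕜) • M₁ v + (s : 𝕜) • M₂ v + N v‖ := by
        rw [factor, norm_smul, RCLike.norm_ofReal, abs_of_nonneg (by positivity)]
    _ ≤ ‖(c : 𝕜) • M₁ v‖ + ‖(s : 𝕜) • M₂ v‖ + ‖N v‖ := norm_add₃_le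
    _ = (c + s + 1) * ‖v‖ := by
        rw [norm_smul, norm_smul, RCLike.norm_ofReal, RCLike.norm_ofReal, abs_of_nonneg hc,
          abs_of_nonneg hs, hM₁.norm_map, hM₂.norm_map, hN.norm_map]
        ring
    _ ≤ 3 * ‖v‖ := by
        gcongr
        nlinarith [sq_nonneg (c - 1), sq_nonneg (s - 1)]

/-- Transferring a product of operators across the tensor cut reverses its order. -/
lemma norm_apply_apply_sub_le {M₁ M₂ Z X : E →L[𝕜] E} (hM₂ : IsBinaryObservable M₂)
    (hZ : IsBinaryObservable Z) (hM₂Z : Commute M₂ Z) (ψ : E) :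
    ‖Z (X ψ) - M₂ (M₁ ψ)‖ ≤ ‖X ψ - M₂ ψ‖ + ‖Z ψ - M₁ ψ‖ :=
  calc ‖Z (X ψ) - M₂ (M₁ ψ)‖ = ‖Z (X ψ - M₂ ψ) + M₂ (Z ψ - M₁ ψ)‖ := by
        rw [map_sub, map_sub, apply_apply_comm hM₂Z, sub_add_sub_cancel]
    _ ≤ ‖X ψ - M₂ ψ‖ + ‖Z ψ - M₁ ψ‖ := by
        refine (norm_add_le _ _).trans_eq ?_
        rw [hZ.norm_map, hM₂.norm_map]

lemma norm_anticommutator_le {M₁ M₂ Z X : E →L[𝕜] E} (hM₁ : IsBinaryObservable M₁)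
    (hM₂ : IsBinaryObservable M₂) (hZ : IsBinaryObservable Z) (hX : IsBinaryObservable X)
    (hM₁X : Commute M₁ X) (hM₂Z : Commute M₂ Z) (ψ : E) :
    ‖Z (X ψ) + X (Z ψ)‖
      ≤ ‖M₁ (M₂ ψ) + M₂ (M₁ ψ)‖ + 2 * (‖Z ψ - M₁ ψ‖ + ‖X ψ - M₂ ψ‖) := by
  have split : Z (X ψ) + X (Z ψ) = (Z (X ψ) - M₂ (M₁ ψ)) + (X (Z ψ) - M₁ (M₂ ψ))
      + (M₁ (M₂ ψ) + M₂ (M₁ ψ)) := by abel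
  rw [split]
  refine norm_add₃_le.trans ?_
  linarith [norm_apply_apply_sub_le (M₁ := M₁) (X := X) hM₂ hZ hM₂Z ψ,
    norm_apply_apply_sub_le (M₁ := M₂) (X := Z) hM₁ hX hM₁X ψ]

/-- Approximate Pauli relations on `ψ`: Bob's regularised observables `Z`, `X` mirror Alice's `M₁`,
`M₂`, both pairs anticommute, and `N₁`, `N₂` are the tilted combinations of `Z` and `X`, all up to
multiples of `η`. -/
structure ApproxPauliRelations (M₁ M₂ N₁ N₂ Z X : E →L[𝕜] E) (c s η : ℝ) (ψ : E) : Prop where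
  mirror_Z : ‖Z ψ - M₁ ψ‖ ≤ 2 * η
  mirror_X : ‖X ψ - M₂ ψ‖ ≤ 2 * η
  anticommutator_M : ‖M₁ (M₂ ψ) + M₂ (M₁ ψ)‖ ≤ 3 * η
  anticommutator_ZX : ‖Z (X ψ) + X (Z ψ)‖ ≤ 11 * η
  tilted_add : ‖N₁ ψ - ((c : 𝕜) • Z ψ + (s : 𝕜) • X ψ)‖ ≤ 5 * η
  tilted_sub : ‖N₂ ψ - ((c : 𝕜) • Z ψ - (s : 𝕜) • X ψ)‖ ≤ 5 * η

lemma approxPauliRelations {c s η : ℝ} (hc : 0 < c) (hs : 0 < s) (hcs : c ^ 2 + s ^ 2 = 1)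
    {M₁ M₂ N₁ N₂ Z X : E →L[𝕜] E} (hM₁ : IsBinaryObservable M₁) (hM₂ : IsBinaryObservable M₂)
    (hN₁ : IsBinaryObservable N₁) (hZ : IsSign (N₁ + N₂) Z) (hX : IsSign (N₁ - N₂) X)
    (hcomm : ∀ A ∈ ({M₁, M₂} : Set (E →L[𝕜] E)), ∀ B ∈ ({N₁, N₂, Z, X} : Set (E →L[𝕜] E)),
      Commute A B) {ψ : E}
    (h₁ : ‖(c : 𝕜) • M₁ ψ + (s : 𝕜) • M₂ ψ - N₁ ψ‖ ≤ c * s * η)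
    (h₂ : ‖(c : 𝕜) • M₁ ψ - (s : 𝕜) • M₂ ψ - N₂ ψ‖ ≤ c * s * η) :
    ApproxPauliRelations M₁ M₂ N₁ N₂ Z X c s η ψ := by
  simp only [Set.mem_insert_iff, Set.mem_singleton_iff, forall_eq_or_imp, forall_eq] at hcomm
  obtain ⟨⟨hM₁N₁, hM₁N₂, hM₁Z, hM₁X⟩, hM₂N₁, hM₂N₂, hM₂Z, hM₂X⟩ := hcomm
  have hc₁ : c ≤ 1 := by nlinarith
  have hs₁ : s ≤ 1 := by nlinarith
  have hη : 0 ≤ η := nonneg_of_mul_nonneg_right ((norm_nonneg _).trans h₁) (mul_pos hc hs)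
  have hcsη : c * s * η ≤ η := mul_le_of_le_one_left hη (mul_le_one₀ hc₁ hs.le hs₁)
  have mirror_Z : ‖Z ψ - M₁ ψ‖ ≤ 2 * η := by
    refine hZ.norm_map_sub_map_le hM₁ (hM₁N₁.add_right hM₁N₂) hM₁Z (mul_pos two_pos hc) ?_
    calc ‖((2 * c : ℝ) : 𝕜) • M₁ ψ - (N₁ + N₂) ψ‖
        ≤ c * s * η + c * s * η := (norm_add_le_of_le h₁ h₂).trans_eq' (congrArg _ <| by
          push_cast [_root_.add_apply]
          module)
      _ ≤ 2 * c * η := by nlinarith [mul_nonneg hc.le hη]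
  have mirror_X : ‖X ψ - M₂ ψ‖ ≤ 2 * η := by
    refine hX.norm_map_sub_map_le hM₂ (hM₂N₁.sub_right hM₂N₂) hM₂X (mul_pos two_pos hs) ?_
    calc ‖((2 * s : ℝ) : 𝕜) • M₂ ψ - (N₁ - N₂) ψ‖
        ≤ c * s * η + c * s * η := (norm_sub_le_of_le h₁ h₂).trans_eq' (congrArg _ <| by
          push_cast [_root_.sub_apply]
          module)
      _ ≤ 2 * s * η := by nlinarith [mul_nonneg hs.le hη]
  have anticommutator_M : ‖M₁ (M₂ ψ) + M₂ (M₁ ψ)‖ ≤ 3 * η := by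
    have := mul_norm_anticommutator_le hc.le hs.le hcs hM₁ hM₂ hN₁ hM₁N₁ hM₂N₁ ψ
    refine le_of_mul_le_mul_left (a := c * s) ?_ (mul_pos hc hs)
    linarith
  refine ⟨mirror_Z, mirror_X, anticommutator_M, ?_, ?_, ?_⟩
  · linarith [norm_anticommutator_le hM₁ hM₂ hZ.isBinaryObservable hX.isBinaryObservable hM₁X hM₂Z
      ψ]
  · have := norm_sub_tilted_le (𝕜 := 𝕜) (abs_le.2 ⟨by linarith, hc₁⟩) (abs_le.2 ⟨by linarith, hs₁⟩)
      (M₁ ψ) (M₂ ψ) (N₁ ψ) (Z ψ) (X ψ)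
    linarith
  · have := norm_sub_tilted_le (𝕜 := 𝕜) (s := -s) (abs_le.2 ⟨by linarith, hc₁⟩)
      (abs_le.2 ⟨by linarith, by linarith⟩) (M₁ ψ) (M₂ ψ) (N₂ ψ) (Z ψ) (X ψ)
    simp only [RCLike.ofReal_neg, neg_smul, ← sub_eq_add_neg] at this
    linarith

end Operators

section Kronecker

variable {R l m n p : Type*}

lemma sub_kronecker [NonUnitalNonAssocRing R] (A B : Matrix l m R) (C : Matrix n p R) :
    (A - B) ⊗ₖ C = A ⊗ₖ C - B ⊗ₖ C := by
  ext ⟨i, a⟩ ⟨j, b⟩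
  simp only [kronecker_apply, Matrix.sub_apply, sub_mul]

lemma kronecker_sub [NonUnitalNonAssocRing R] (A : Matrix l m R) (B C : Matrix n p R) :
    A ⊗ₖ (B - C) = A ⊗ₖ B - A ⊗ₖ C := by
  ext ⟨i, a⟩ ⟨j, b⟩
  simp only [kronecker_apply, Matrix.sub_apply, mul_sub]

variable [CommRing R]

lemma commute_kronecker_one_one_kronecker [Fintype m] [DecidableEq m] [Fintype n] [DecidableEq n]
    (A : Matrix m m R) (B : Matrix n n R) :
    Commute (A ⊗ₖ (1 : Matrix n n R)) ((1 : Matrix m m R) ⊗ₖ B) := by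
  rw [Commute, SemiconjBy, ← mul_kronecker_mul, ← mul_kronecker_mul, one_mul, mul_one, one_mul,
    mul_one]

variable [StarRing R]

lemma conjTranspose_kronecker_mul_self [Fintype l] [Fintype n] (A : Matrix l m R)
    (B : Matrix n p R) : (A ⊗ₖ B)ᴴ * (A ⊗ₖ B) = (Aᴴ * A) ⊗ₖ (Bᴴ * B) := by
  rw [conjTranspose_kronecker, mul_kronecker_mul]

lemma kronecker_isometry [Fintype l] [DecidableEq m] [Fintype n] [DecidableEq p]
    {A : Matrix l m R} {B : Matrix n p R} (hA : Aᴴ * A = 1) (hB : Bᴴ * B = 1) :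
    (A ⊗ₖ B)ᴴ * (A ⊗ₖ B) = 1 := by
  rw [conjTranspose_kronecker_mul_self, hA, hB, one_kronecker_one]

lemma mul_isometry [Fintype l] [Fintype m] [DecidableEq m] [DecidableEq n]
    {A : Matrix l m R} {B : Matrix m n R} (hA : Aᴴ * A = 1) (hB : Bᴴ * B = 1) :
    (A * B)ᴴ * (A * B) = 1 := by
  rw [conjTranspose_mul, Matrix.mul_assoc, ← Matrix.mul_assoc Aᴴ, hA, Matrix.one_mul, hB]

variable [Fintype m] [DecidableEq m] [Fintype n] [DecidableEq n]

lemma IsBinaryObservable.isometry {A : Matrix m m R} (hA : IsBinaryObservable A) : Aᴴ * A = 1 := by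
  rw [← star_eq_conjTranspose, hA.isSelfAdjoint.star_eq, hA.mul_self]

lemma IsBinaryObservable.kronecker {A : Matrix m m R} {B : Matrix n n R}
    (hA : IsBinaryObservable A) (hB : IsBinaryObservable B) : IsBinaryObservable (A ⊗ₖ B) where
  isSelfAdjoint := by
    rw [IsSelfAdjoint, star_eq_conjTranspose, conjTranspose_kronecker, ← star_eq_conjTranspose,
      ← star_eq_conjTranspose, hA.isSelfAdjoint, hB.isSelfAdjoint]
  mul_self := by rw [← mul_kronecker_mul, hA.mul_self, hB.mul_self, one_kronecker_one]

open scoped MatrixOrder ComplexOrder in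
lemma IsSign.one_kronecker {S Z : Matrix n n ℂ} (h : IsSign S Z) :
    IsSign ((1 : Matrix m m ℂ) ⊗ₖ S) ((1 : Matrix m m ℂ) ⊗ₖ Z) where
  isBinaryObservable := IsBinaryObservable.one.kronecker h.isBinaryObservable
  commute := by
    rw [Commute, SemiconjBy, ← mul_kronecker_mul, ← mul_kronecker_mul, h.commute.eq]
  nonneg := by
    rw [← mul_kronecker_mul, one_mul, nonneg_iff_posSemidef]
    exact PosSemidef.one.kronecker (nonneg_iff_posSemidef.1 h.nonneg)

end Kronecker

section Action

variable {𝕜 l m n : Type*} [RCLike 𝕜] [Fintype m] [Fintype n] [DecidableEq n]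

lemma toEuclideanLin_mul_apply [DecidableEq m] (A : Matrix l m 𝕜) (B : Matrix m n 𝕜)
    (v : EuclideanSpace 𝕜 n) :
    toEuclideanLin (A * B) v = toEuclideanLin A (toEuclideanLin B v) :=
  LinearMap.congr_fun (toLpLin_mul_same 2 A B) v

lemma sq_norm_toEuclideanLin (A : Matrix m n 𝕜) (v : EuclideanSpace 𝕜 n) :
    ‖toEuclideanLin A v‖ ^ 2 = RCLike.re (inner 𝕜 v (toEuclideanLin (Aᴴ * A) v)) := by
  classical
  rw [toEuclideanLin_mul_apply, toEuclideanLin_conjTranspose_eq_adjoint,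
    LinearMap.adjoint_inner_right]
  exact (inner_self_eq_norm_sq (𝕜 := 𝕜) _).symm

lemma sq_norm_toEuclideanLin_of_gram {A : Matrix m n 𝕜} {r : ℝ} (hA : Aᴴ * A = (r : 𝕜) • 1)
    (v : EuclideanSpace 𝕜 n) : ‖toEuclideanLin A v‖ ^ 2 = r * ‖v‖ ^ 2 := by
  rw [sq_norm_toEuclideanLin, hA, map_smul, toLpLin_one, LinearMap.smul_apply, inner_smul_right,
    RCLike.re_ofReal_mul]
  exact congrArg _ (inner_self_eq_norm_sq (𝕜 := 𝕜) v)

lemma norm_toEuclideanLin_le_of_gram {A : Matrix m n 𝕜} {r : ℝ} (hr : r ≤ 1)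
    (hA : Aᴴ * A = (r : 𝕜) • 1) (v : EuclideanSpace 𝕜 n) : ‖toEuclideanLin A v‖ ≤ ‖v‖ := by
  rw [← sq_le_sq₀ (norm_nonneg _) (norm_nonneg _), sq_norm_toEuclideanLin_of_gram hA]
  exact mul_le_of_le_one_left (sq_nonneg _) hr

lemma norm_toEuclideanLin_of_isometry {A : Matrix m n 𝕜} (hA : Aᴴ * A = 1)
    (v : EuclideanSpace 𝕜 n) : ‖toEuclideanLin A v‖ = ‖v‖ := by
  rw [← sq_eq_sq₀ (norm_nonneg _) (norm_nonneg _),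
    sq_norm_toEuclideanLin_of_gram (r := 1) (by rw [hA, RCLike.ofReal_one, one_smul]), one_mul]

end Action

lemma norm_kronecker_sub_kronecker_le {𝕜 l m n p : Type*} [RCLike 𝕜] [Fintype l] [Fintype m]
    [DecidableEq m] [Fintype n] [Fintype p] [DecidableEq p] {A A' : Matrix l m 𝕜}
    {B B' : Matrix n p 𝕜}
    (hA' : A'ᴴ * A' = 1) (hB : Bᴴ * B = 1) (ψ : EuclideanSpace 𝕜 (m × p)) :
    ‖toEuclideanLin (A ⊗ₖ B) ψ - toEuclideanLin (A' ⊗ₖ B') ψ‖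
      ≤ ‖toEuclideanLin ((A - A') ⊗ₖ (1 : Matrix p p 𝕜)) ψ‖
        + ‖toEuclideanLin ((1 : Matrix m m 𝕜) ⊗ₖ (B - B')) ψ‖ := by
  classical
  have telescope : A ⊗ₖ B - A' ⊗ₖ B' = ((1 : Matrix l l 𝕜) ⊗ₖ B) * ((A - A') ⊗ₖ (1 : Matrix p p 𝕜))
      + (A' ⊗ₖ (1 : Matrix n n 𝕜)) * ((1 : Matrix m m 𝕜) ⊗ₖ (B - B')) := by
    rw [← mul_kronecker_mul, ← mul_kronecker_mul]
    simp only [Matrix.one_mul, Matrix.mul_one]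
    rw [sub_kronecker, kronecker_sub, sub_add_sub_cancel]
  rw [← LinearMap.sub_apply, ← map_sub, telescope, map_add, LinearMap.add_apply,
    toEuclideanLin_mul_apply, toEuclideanLin_mul_apply]
  refine (norm_add_le _ _).trans_eq ?_
  rw [norm_toEuclideanLin_of_isometry (kronecker_isometry IsBinaryObservable.one.isometry hB),
    norm_toEuclideanLin_of_isometry (kronecker_isometry hA' IsBinaryObservable.one.isometry)]

/-- Pauli `σ_z`. -/
abbrev pauliZ : Matrix (Fin 2) (Fin 2) ℂ := !![1, 0; 0, -1]

/-- Pauli `σ_x`. -/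
abbrev pauliX : Matrix (Fin 2) (Fin 2) ℂ := !![0, 1; 1, 0]

lemma isBinaryObservable_pauliZ : IsBinaryObservable pauliZ where
  isSelfAdjoint := by ext i j; fin_cases i <;> fin_cases j <;> simp
  mul_self := by ext i j; fin_cases i <;> fin_cases j <;> simp

lemma isBinaryObservable_pauliX : IsBinaryObservable pauliX where
  isSelfAdjoint := by ext i j; fin_cases i <;> fin_cases j <;> simp
  mul_self := by ext i j; fin_cases i <;> fin_cases j <;> simp

lemma isBinaryObservable_tilted {c s : ℝ} (hcs : c ^ 2 + s ^ 2 = 1) :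
    IsBinaryObservable ((c : ℂ) • pauliZ + (s : ℂ) • pauliX) where
  isSelfAdjoint :=
    .add (.smul (Complex.conj_ofReal c) isBinaryObservable_pauliZ.isSelfAdjoint)
      (.smul (Complex.conj_ofReal s) isBinaryObservable_pauliX.isSelfAdjoint)
  mul_self := by
    have hcs' : (c : ℂ) * c + s * s = 1 := by
      rw [← sq, ← sq]
      exact_mod_cast congrArg ((↑) : ℝ → ℂ) hcs
    have anticomm : pauliZ * pauliX + pauliX * pauliZ = 0 := by
      ext i j; fin_cases i <;> fin_cases j <;> simp
    calc ((c : ℂ) • pauliZ + (s : ℂ) • pauliX) * ((c : ℂ) • pauliZ + (s : ℂ) • pauliX)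
        = ((c : ℂ) * c) • (pauliZ * pauliZ) + ((s : ℂ) * s) • (pauliX * pauliX)
          + ((c : ℂ) * s) • (pauliZ * pauliX + pauliX * pauliZ) := by
          simp only [add_mul, mul_add, smul_mul_smul_comm]
          module
      _ = 1 := by
          rw [isBinaryObservable_pauliZ.mul_self, isBinaryObservable_pauliX.mul_self, anticomm,
            smul_zero, add_zero, ← add_smul, hcs', one_smul]

section SwapIsometry

variable {R l m n : Type*}

/-- The operator `v ↦ e₀ ⊗ A₀ v + e₁ ⊗ A₁ v`. -/
def stack (A₀ A₁ : Matrix m n R) : Matrix (Fin 2 × m) n R :=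
  of fun p ↦ ![A₀, A₁] p.1 p.2

variable [CommRing R]

lemma stack_mul [Fintype m] (A₀ A₁ : Matrix l m R) (B : Matrix m n R) :
    stack A₀ A₁ * B = stack (A₀ * B) (A₁ * B) := by
  ext ⟨i, a⟩ j
  fin_cases i <;> rfl

lemma stack_sub (A₀ A₁ B₀ B₁ : Matrix m n R) :
    stack A₀ A₁ - stack B₀ B₁ = stack (A₀ - B₀) (A₁ - B₁) := by
  ext ⟨i, a⟩ j
  fin_cases i <;> rfl

lemma conjTranspose_stack_mul_stack [StarRing R] [Fintype m] (A₀ A₁ B₀ B₁ : Matrix m n R) :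
    (stack A₀ A₁)ᴴ * stack B₀ B₁ = A₀ᴴ * B₀ + A₁ᴴ * B₁ := by
  ext i j
  simp [stack, mul_apply, Fintype.sum_prod_type]

lemma kronecker_one_mul_stack [Fintype m] [DecidableEq m] (P : Matrix (Fin 2) (Fin 2) R)
    (A₀ A₁ : Matrix m n R) :
    (P ⊗ₖ (1 : Matrix m m R)) * stack A₀ A₁
      = stack (P 0 0 • A₀ + P 0 1 • A₁) (P 1 0 • A₀ + P 1 1 • A₁) := by
  ext ⟨i, a⟩ j
  fin_cases i <;>
    simp [stack, mul_apply, Fintype.sum_prod_type, one_apply]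

variable [Fintype n] [DecidableEq n]

/-- The swap isometry `v ↦ e₀ ⊗ ½(1 + Z) v + e₁ ⊗ ½ X (1 - Z) v`. When `Z` and `X` are exact Pauli
operators on a tensor factor `ℂ²`, it extracts that factor. -/
noncomputable def swapIsometry (Z X : Matrix n n ℂ) : Matrix (Fin 2 × n) n ℂ :=
  stack ((1 / 2 : ℂ) • (1 + Z)) ((1 / 2 : ℂ) • (X * (1 - Z)))

variable {Z X : Matrix n n ℂ}

lemma swapIsometry_isometry (hZ : IsBinaryObservable Z) (hX : IsBinaryObservable X) :
    (swapIsometry Z X)ᴴ * swapIsometry Z X = 1 := by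
  have hZ' : Zᴴ = Z := hZ.isSelfAdjoint
  have hX' : Xᴴ = X := hX.isSelfAdjoint
  have cancel : (1 - Z) * X * (X * (1 - Z)) = (1 - Z) * (1 - Z) := by
    rw [mul_assoc, ← mul_assoc X, hX.mul_self, one_mul]
  simp only [swapIsometry, conjTranspose_stack_mul_stack, conjTranspose_smul, conjTranspose_mul,
    conjTranspose_add, conjTranspose_sub, conjTranspose_one, hZ', hX', smul_mul_smul_comm, cancel]
  simp only [add_mul, mul_add, sub_mul, mul_sub, one_mul, mul_one, hZ.mul_self, star_div₀, star_one,
    star_ofNat]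
  module

lemma swapIsometry_mul_left (hZ : IsBinaryObservable Z) (X : Matrix n n ℂ) :
    swapIsometry Z X * Z = (pauliZ ⊗ₖ (1 : Matrix n n ℂ)) * swapIsometry Z X := by
  rw [swapIsometry, stack_mul, kronecker_one_mul_stack]
  congr 1
  · simp [add_mul, hZ.mul_self, add_comm]
  · simp [mul_assoc, sub_mul, mul_sub, hZ.mul_self, ← smul_neg]

/-- The obstruction to intertwining `X` with `σ_x` is the anticommutator of `Z` and `X`. -/
lemma swapIsometry_mul_right_sub (Z : Matrix n n ℂ) (hX : IsBinaryObservable X) :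
    swapIsometry Z X * X - (pauliX ⊗ₖ (1 : Matrix n n ℂ)) * swapIsometry Z X
      = stack ((1 / 2 : ℂ) • 1) (-(1 / 2 : ℂ) • X) * (Z * X + X * Z) := by
  have cancel : X * (X * Z) = Z := by rw [← mul_assoc, hX.mul_self, one_mul]
  rw [swapIsometry, stack_mul, kronecker_one_mul_stack, stack_sub, stack_mul]
  congr 1
  · simp only [of_apply, cons_val', cons_val_zero, cons_val_one, zero_smul, one_smul, zero_add,
      smul_mul_assoc, one_mul, add_mul, mul_sub, mul_one, ← smul_sub]
    module
  · simp only [of_apply, cons_val', cons_val_zero, cons_val_one, zero_smul, one_smul, add_zero,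
      smul_mul_assoc, sub_mul, mul_sub, mul_one, mul_add, mul_assoc, hX.mul_self, cancel]
    module

end SwapIsometry

section Intertwining

variable {m n : Type*} [Fintype m] [DecidableEq m] [Fintype n] [DecidableEq n]

lemma half_stack_gram {X : Matrix n n ℂ} (hX : IsBinaryObservable X) :
    (stack ((1 / 2 : ℂ) • 1) (-(1 / 2 : ℂ) • X))ᴴ * stack ((1 / 2 : ℂ) • 1) (-(1 / 2 : ℂ) • X)
      = ((1 / 2 : ℝ) : ℂ) • 1 := by
  have hXX : Xᴴ * X = 1 := hX.isometry
  rw [conjTranspose_stack_mul_stack]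
  simp only [conjTranspose_smul, conjTranspose_one, smul_mul_smul_comm, one_mul, hXX, star_neg,
    star_div₀, star_one, star_ofNat, ← add_smul]
  norm_num

lemma norm_swapIsometry_residual_kronecker_one_le (Z : Matrix m m ℂ) {X : Matrix m m ℂ}
    (hX : IsBinaryObservable X) (ψ : EuclideanSpace ℂ (m × n)) :
    ‖toEuclideanLin ((swapIsometry Z X * X - (pauliX ⊗ₖ (1 : Matrix m m ℂ)) * swapIsometry Z X)
        ⊗ₖ (1 : Matrix n n ℂ)) ψ‖
      ≤ ‖toEuclideanLin ((Z * X + X * Z) ⊗ₖ (1 : Matrix n n ℂ)) ψ‖ := by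
  rw [swapIsometry_mul_right_sub Z hX, ← Matrix.one_mul (1 : Matrix n n ℂ), mul_kronecker_mul,
    Matrix.one_mul, toEuclideanLin_mul_apply]
  refine norm_toEuclideanLin_le_of_gram (r := 1 / 2) (by norm_num) ?_ _
  rw [conjTranspose_kronecker_mul_self, half_stack_gram hX, IsBinaryObservable.one.isometry,
    smul_kronecker, one_kronecker_one]
  rfl

lemma norm_one_kronecker_swapIsometry_residual_le (Z : Matrix n n ℂ) {X : Matrix n n ℂ}
    (hX : IsBinaryObservable X) (ψ : EuclideanSpace ℂ (m × n)) :
    ‖toEuclideanLin ((1 : Matrix m m ℂ) ⊗ₖ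
        (swapIsometry Z X * X - (pauliX ⊗ₖ (1 : Matrix n n ℂ)) * swapIsometry Z X)) ψ‖
      ≤ ‖toEuclideanLin ((1 : Matrix m m ℂ) ⊗ₖ (Z * X + X * Z)) ψ‖ := by
  rw [swapIsometry_mul_right_sub Z hX, ← Matrix.one_mul (1 : Matrix m m ℂ), mul_kronecker_mul,
    Matrix.one_mul, toEuclideanLin_mul_apply]
  refine norm_toEuclideanLin_le_of_gram (r := 1 / 2) (by norm_num) ?_ _
  rw [conjTranspose_kronecker_mul_self, half_stack_gram hX, IsBinaryObservable.one.isometry,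
    kronecker_smul, one_kronecker_one]
  rfl

lemma swapIsometry_mul_sub_tilted {Z : Matrix n n ℂ} (hZ : IsBinaryObservable Z)
    (X N : Matrix n n ℂ) (c s : ℂ) :
    swapIsometry Z X * N
        - ((c • pauliZ + s • pauliX) ⊗ₖ (1 : Matrix n n ℂ)) * swapIsometry Z X
      = swapIsometry Z X * (N - (c • Z + s • X))
        + s • (swapIsometry Z X * X
          - (pauliX ⊗ₖ (1 : Matrix n n ℂ)) * swapIsometry Z X) := by
  rw [add_kronecker, smul_kronecker, smul_kronecker, Matrix.add_mul, Matrix.smul_mul,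
    Matrix.smul_mul, ← swapIsometry_mul_left hZ, Matrix.mul_sub, Matrix.mul_add, Matrix.mul_smul,
    Matrix.mul_smul]
  module

lemma norm_one_kronecker_swapIsometry_tilted_le {Z X : Matrix n n ℂ} (hZ : IsBinaryObservable Z)
    (hX : IsBinaryObservable X) (N : Matrix n n ℂ) (c : ℂ) {s : ℂ} (hs : ‖s‖ ≤ 1)
    (ψ : EuclideanSpace ℂ (m × n)) :
    ‖toEuclideanLin ((1 : Matrix m m ℂ) ⊗ₖ (swapIsometry Z X * N
        - ((c • pauliZ + s • pauliX) ⊗ₖ (1 : Matrix n n ℂ)) * swapIsometry Z X)) ψ‖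
      ≤ ‖toEuclideanLin ((1 : Matrix m m ℂ) ⊗ₖ (N - (c • Z + s • X))) ψ‖
        + ‖toEuclideanLin ((1 : Matrix m m ℂ) ⊗ₖ (Z * X + X * Z)) ψ‖ := by
  have hV : ((1 : Matrix m m ℂ) ⊗ₖ swapIsometry Z X)ᴴ * ((1 : Matrix m m ℂ) ⊗ₖ swapIsometry Z X)
      = 1 := kronecker_isometry IsBinaryObservable.one.isometry (swapIsometry_isometry hZ hX)
  have split : (1 : Matrix m m ℂ) ⊗ₖ (swapIsometry Z X * (N - (c • Z + s • X)))
      = ((1 : Matrix m m ℂ) ⊗ₖ swapIsometry Z X)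
        * ((1 : Matrix m m ℂ) ⊗ₖ (N - (c • Z + s • X))) := by
    rw [← mul_kronecker_mul, Matrix.one_mul]
  rw [swapIsometry_mul_sub_tilted hZ, kronecker_add, kronecker_smul, split, map_add, map_smul,
    LinearMap.add_apply, LinearMap.smul_apply, toEuclideanLin_mul_apply]
  refine norm_add_le_of_le (norm_toEuclideanLin_of_isometry hV _).le ?_
  rw [norm_smul]
  exact (mul_le_of_le_one_left (norm_nonneg _) hs).trans
    (norm_one_kronecker_swapIsometry_residual_le Z hX ψ)

end Intertwining

section Stabilizer

variable {𝕜 E F : Type*} [RCLike 𝕜] [NormedAddCommGroup E] [NormedSpace 𝕜 E]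
  [NormedAddCommGroup F] [NormedSpace 𝕜 F]

lemma norm_sub_average_le {P Q : E →ₗ[𝕜] E} (hP : ∀ v, ‖P v‖ = ‖v‖) (w : E) :
    ‖w - (1 / 4 : 𝕜) • (w + Q w + P (w + Q w))‖ ≤ (‖P w - w‖ + ‖Q w - w‖) / 2 := by
  have split : w - (1 / 4 : 𝕜) • (w + Q w + P (w + Q w))
      = -((1 / 2 : 𝕜) • (P w - w)) - (1 / 4 : 𝕜) • (Q w - w) - (1 / 4 : 𝕜) • P (Q w - w) := by
    simp only [map_add, map_sub]
    module
  have norm_half (v : E) : ‖(1 / 2 : 𝕜) • v‖ = ‖v‖ / 2 := by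
    rw [norm_smul, norm_div, norm_one, RCLike.norm_ofNat]
    ring
  have norm_quarter (v : E) : ‖(1 / 4 : 𝕜) • v‖ = ‖v‖ / 4 := by
    rw [norm_smul, norm_div, norm_one, RCLike.norm_ofNat]
    ring
  rw [split]
  refine (norm_sub_le_of_le (norm_sub_le _ _) le_rfl).trans ?_
  rw [norm_neg, norm_half, norm_quarter, norm_quarter, hP]
  linarith

lemma exists_unit_norm_sub_le {J : E →ₗ[𝕜] F} (hJ : ∀ v, ‖J v‖ = ‖v‖) {x : F} (hx : ‖x‖ = 1)
    {e : E} (he : ‖e‖ = 1) (y : E) : ∃ u, ‖u‖ = 1 ∧ ‖x - J u‖ ≤ 2 * ‖x - J y‖ := by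
  rcases eq_or_ne y 0 with rfl | hy
  · refine ⟨e, he, (norm_sub_le _ _).trans_eq ?_⟩
    rw [map_zero, sub_zero, hJ, hx, he]
    norm_num
  · set u := (‖y‖ : 𝕜)⁻¹ • y
    have hu : ‖u‖ = 1 := norm_smul_inv_norm hy
    have hy_eq : y = (‖y‖ : 𝕜) • u := (smul_inv_smul₀ (by simpa using hy) y).symm
    have rescale : ‖J y - J u‖ ≤ ‖x - J y‖ := by
      calc ‖J y - J u‖ = ‖((‖y‖ - 1 : ℝ) : 𝕜) • u‖ := by
            rw [← map_sub, hJ, RCLike.ofReal_sub, RCLike.ofReal_one, sub_smul, ← hy_eq, one_smul]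
        _ = |‖x‖ - ‖J y‖| := by
            rw [norm_smul, RCLike.norm_ofReal, hu, mul_one, hx, hJ, abs_sub_comm]
        _ ≤ ‖x - J y‖ := abs_norm_sub_norm_le x (J y)
    refine ⟨u, hu, (norm_sub_le_norm_sub_add_norm_sub x (J y) (J u)).trans ?_⟩
    linarith

end Stabilizer

section TensorVec

variable {κ κ' m n : Type*}

/-- The vector `u ⊗ φ`, with the tensor factors regrouped from `(κ × κ') × (m × n)` to
`(κ × m) × (κ' × n)`. -/
def tensorVec (u : EuclideanSpace ℂ (κ × κ')) :
    EuclideanSpace ℂ (m × n) →ₗ[ℂ] EuclideanSpace ℂ ((κ × m) × (κ' × n)) where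
  toFun φ := WithLp.toLp 2 fun p ↦ u (p.1.1, p.2.1) * φ (p.1.2, p.2.2)
  map_add' φ φ' := by ext p; exact mul_add _ _ _
  map_smul' r φ := by ext p; exact mul_left_comm _ _ _

lemma tensorVec_apply (u : EuclideanSpace ℂ (κ × κ')) (φ : EuclideanSpace ℂ (m × n))
    (p : (κ × m) × (κ' × n)) : tensorVec u φ p = u (p.1.1, p.2.1) * φ (p.1.2, p.2.2) :=
  rfl

variable [Fintype κ] [Fintype κ'] [Fintype m] [Fintype n]

lemma norm_tensorVec (u : EuclideanSpace ℂ (κ × κ')) (φ : EuclideanSpace ℂ (m × n)) :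
    ‖tensorVec u φ‖ = ‖u‖ * ‖φ‖ := by
  rw [← sq_eq_sq₀ (norm_nonneg _) (by positivity), mul_pow, EuclideanSpace.norm_sq_eq,
    EuclideanSpace.norm_sq_eq, EuclideanSpace.norm_sq_eq, Finset.sum_mul_sum,
    ← Fintype.sum_prod_type']
  exact Fintype.sum_equiv (Equiv.prodProdProdComm κ m κ' n) _ _ fun p ↦ by
    rw [tensorVec_apply, norm_mul, mul_pow]; rfl

variable [DecidableEq κ] [DecidableEq κ'] [DecidableEq m] [DecidableEq n]

lemma toEuclideanLin_local_apply (A : Matrix κ κ ℂ) (B : Matrix κ' κ' ℂ)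
    (w : EuclideanSpace ℂ ((κ × m) × (κ' × n))) (i : κ) (a : m) (j : κ') (b : n) :
    toEuclideanLin ((A ⊗ₖ (1 : Matrix m m ℂ)) ⊗ₖ (B ⊗ₖ (1 : Matrix n n ℂ))) w ((i, a), (j, b))
      = ∑ q : κ × κ', A i q.1 * B j q.2 * w ((q.1, a), (q.2, b)) := by
  simp [toLpLin_apply, mulVec, dotProduct, Fintype.sum_prod_type, one_apply]

lemma toEuclideanLin_local_tensorVec (A : Matrix κ κ ℂ) (B : Matrix κ' κ' ℂ)
    (u : EuclideanSpace ℂ (κ × κ')) (φ : EuclideanSpace ℂ (m × n)) :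
    toEuclideanLin ((A ⊗ₖ (1 : Matrix m m ℂ)) ⊗ₖ (B ⊗ₖ (1 : Matrix n n ℂ))) (tensorVec u φ)
      = tensorVec (toEuclideanLin (A ⊗ₖ B) u) φ := by
  ext ⟨⟨i, a⟩, j, b⟩
  rw [toEuclideanLin_local_apply, tensorVec_apply]
  change _ = (∑ q, _) * _
  rw [Finset.sum_mul]
  exact Finset.sum_congr rfl fun q _ ↦ by rw [tensorVec_apply, ← mul_assoc]; rfl

end TensorVec

section EPR

variable {m n : Type*}

/-- The EPR state `(e₀ ⊗ e₀ + e₁ ⊗ e₁) / √2`. -/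
noncomputable def epr : EuclideanSpace ℂ (Fin 2 × Fin 2) :=
  WithLp.toLp 2 fun q ↦ if q.1 = q.2 then ((√2 : ℝ) : ℂ)⁻¹ else 0

lemma norm_epr : ‖epr‖ = 1 := by
  rw [← sq_eq_sq₀ (norm_nonneg _) zero_le_one, EuclideanSpace.norm_sq_eq]
  simp only [epr, Fintype.sum_prod_type, Fin.sum_univ_two, Fin.isValue, ↓reduceIte, norm_inv,
    Complex.norm_real, Real.norm_eq_abs, inv_pow, sq_abs, Nat.ofNat_nonneg, Real.sq_sqrt,
    zero_ne_one, one_ne_zero, norm_zero]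
  norm_num

/-- The partial inner product of a vector with the EPR state. -/
noncomputable def eprComponent (w : EuclideanSpace ℂ ((Fin 2 × m) × (Fin 2 × n))) :
    EuclideanSpace ℂ (m × n) :=
  WithLp.toLp 2 fun p ↦ ((√2 : ℝ) : ℂ)⁻¹ * (w ((0, p.1), (0, p.2)) + w ((1, p.1), (1, p.2)))

variable [Fintype m] [DecidableEq m] [Fintype n] [DecidableEq n]

/-- The EPR state spans the common fixed space of `σ_z ⊗ σ_z` and `σ_x ⊗ σ_x`. -/
lemma average_local_pauli (w : EuclideanSpace ℂ ((Fin 2 × m) × (Fin 2 × n))) :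
    let P := toEuclideanLin ((pauliZ ⊗ₖ (1 : Matrix m m ℂ)) ⊗ₖ (pauliZ ⊗ₖ (1 : Matrix n n ℂ)))
    let Q := toEuclideanLin ((pauliX ⊗ₖ (1 : Matrix m m ℂ)) ⊗ₖ (pauliX ⊗ₖ (1 : Matrix n n ℂ)))
    (1 / 4 : ℂ) • (w + Q w + P (w + Q w)) = tensorVec epr (eprComponent w) := by
  intro P Q
  have hsqrt : ((√2 : ℝ) : ℂ)⁻¹ * ((√2 : ℝ) : ℂ)⁻¹ = 1 / 2 := by
    rw [← mul_inv, ← Complex.ofReal_mul, Real.mul_self_sqrt zero_le_two]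
    norm_num
  ext ⟨⟨i, a⟩, j, b⟩
  rw [tensorVec_apply]
  simp only [PiLp.smul_apply, PiLp.add_apply, P, Q, toEuclideanLin_local_apply, epr, eprComponent,
    Fintype.sum_prod_type, Fin.sum_univ_two, smul_eq_mul]
  fin_cases i <;> fin_cases j <;> simp [← mul_assoc, hsqrt] <;> ring

lemma exists_unit_norm_sub_tensorVec_epr_le {w : EuclideanSpace ℂ ((Fin 2 × m) × (Fin 2 × n))}
    (hw : ‖w‖ = 1) {φ : EuclideanSpace ℂ (m × n)} (hφ : ‖φ‖ = 1) :
    ∃ junk : EuclideanSpace ℂ (m × n), ‖junk‖ = 1 ∧ ‖w - tensorVec epr junk‖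
      ≤ ‖toEuclideanLin ((pauliZ ⊗ₖ (1 : Matrix m m ℂ)) ⊗ₖ (pauliZ ⊗ₖ (1 : Matrix n n ℂ))) w - w‖
        + ‖toEuclideanLin ((pauliX ⊗ₖ (1 : Matrix m m ℂ)) ⊗ₖ (pauliX ⊗ₖ (1 : Matrix n n ℂ))) w
          - w‖ := by
  have hJ (v : EuclideanSpace ℂ (m × n)) : ‖tensorVec epr v‖ = ‖v‖ := by
    rw [norm_tensorVec, norm_epr, one_mul]
  have hP := (isBinaryObservable_pauliZ.kronecker (.one (R := Matrix m m ℂ))).kronecker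
    (isBinaryObservable_pauliZ.kronecker (.one (R := Matrix n n ℂ)))
  obtain ⟨junk, hjunk, hle⟩ := exists_unit_norm_sub_le hJ hw hφ (eprComponent w)
  refine ⟨junk, hjunk, hle.trans ?_⟩
  rw [← average_local_pauli]
  linarith [norm_sub_average_le
    (Q := toEuclideanLin ((pauliX ⊗ₖ (1 : Matrix m m ℂ)) ⊗ₖ (pauliX ⊗ₖ (1 : Matrix n n ℂ))))
    (norm_toEuclideanLin_of_isometry hP.isometry) w]

end EPR

section Robustness

variable {m n : Type*} [Fintype m] [DecidableEq m] [Fintype n] [DecidableEq n]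

/-- Alice's operator `A ⊗ 1` on the shared space. -/
noncomputable def aliceOp (n : Type*) [Fintype n] [DecidableEq n] (A : Matrix m m ℂ) :
    EuclideanSpace ℂ (m × n) →L[ℂ] EuclideanSpace ℂ (m × n) :=
  toEuclideanCLM (𝕜 := ℂ) (A ⊗ₖ (1 : Matrix n n ℂ))

/-- Bob's operator `1 ⊗ B` on the shared space. -/
noncomputable def bobOp (m : Type*) [Fintype m] [DecidableEq m] (B : Matrix n n ℂ) :
    EuclideanSpace ℂ (m × n) →L[ℂ] EuclideanSpace ℂ (m × n) :=
  toEuclideanCLM (𝕜 := ℂ) ((1 : Matrix m m ℂ) ⊗ₖ B)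

/-- Alice's ideal observables, preceded by the identity. -/
abbrev idealA : Fin 3 → Matrix (Fin 2) (Fin 2) ℂ :=
  ![1, pauliZ, pauliX]

/-- Bob's ideal observables, preceded by the identity. -/
noncomputable abbrev idealB (c s : ℝ) : Fin 3 → Matrix (Fin 2) (Fin 2) ℂ :=
  ![1, (c : ℂ) • pauliZ + (s : ℂ) • pauliX, (c : ℂ) • pauliZ - (s : ℂ) • pauliX]

lemma isBinaryObservable_cons {R : Type*} [Monoid R] [StarMul R] {a b : R}
    (ha : IsBinaryObservable a) (hb : IsBinaryObservable b) (x : Fin 3) :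
    IsBinaryObservable (![1, a, b] x) := by
  fin_cases x
  exacts [.one, ha, hb]

lemma isBinaryObservable_idealA (x : Fin 3) : IsBinaryObservable (idealA x) :=
  isBinaryObservable_cons isBinaryObservable_pauliZ isBinaryObservable_pauliX x

lemma isBinaryObservable_idealB {c s : ℝ} (hcs : c ^ 2 + s ^ 2 = 1) (y : Fin 3) :
    IsBinaryObservable (idealB c s y) := by
  have hsub := isBinaryObservable_tilted (c := c) (s := -s) (by rwa [neg_sq])
  rw [Complex.ofReal_neg, neg_smul, ← sub_eq_add_neg] at hsub
  exact isBinaryObservable_cons (isBinaryObservable_tilted hcs) hsub y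

lemma toEuclideanLin_kronecker_apply (A : Matrix m m ℂ) (B : Matrix n n ℂ)
    (ψ : EuclideanSpace ℂ (m × n)) :
    toEuclideanLin (A ⊗ₖ B) ψ = aliceOp n A (bobOp m B ψ) := by
  have split : A ⊗ₖ B = (A ⊗ₖ (1 : Matrix n n ℂ)) * ((1 : Matrix m m ℂ) ⊗ₖ B) := by
    rw [← mul_kronecker_mul, Matrix.mul_one, Matrix.one_mul]
  rw [split]
  exact toEuclideanLin_mul_apply _ _ ψ

lemma isBinaryObservable_aliceOp {A : Matrix m m ℂ} (hA : IsBinaryObservable A) :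
    IsBinaryObservable (aliceOp n A) :=
  (hA.kronecker .one).map (toEuclideanCLM (𝕜 := ℂ))

lemma isBinaryObservable_bobOp {B : Matrix n n ℂ} (hB : IsBinaryObservable B) :
    IsBinaryObservable (bobOp m B) :=
  (IsBinaryObservable.one.kronecker hB).map (toEuclideanCLM (𝕜 := ℂ))

lemma commute_aliceOp_bobOp (A : Matrix m m ℂ) (B : Matrix n n ℂ) :
    Commute (aliceOp n A) (bobOp m B) :=
  (commute_kronecker_one_one_kronecker A B).map (toEuclideanCLM (𝕜 := ℂ))

lemma inner_toEuclideanLin_kronecker {A : Matrix m m ℂ} (hA : IsBinaryObservable A)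
    (B : Matrix n n ℂ) (ψ : EuclideanSpace ℂ (m × n)) :
    inner ℂ ψ (toEuclideanLin (A ⊗ₖ B) ψ) = inner ℂ (aliceOp n A ψ) (bobOp m B ψ) := by
  rw [toEuclideanLin_kronecker_apply]
  exact ((isBinaryObservable_aliceOp hA).inner_map_left (𝕜 := ℂ) _ _).symm

lemma aliceOp_mul (A A' : Matrix m m ℂ) :
    aliceOp n (A * A') = aliceOp n A * aliceOp n A' := by
  rw [aliceOp, aliceOp, aliceOp, ← map_mul, ← mul_kronecker_mul, Matrix.mul_one]

lemma bobOp_mul (B B' : Matrix n n ℂ) :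
    bobOp m (B * B') = bobOp m B * bobOp m B' := by
  rw [bobOp, bobOp, bobOp, ← map_mul, ← mul_kronecker_mul, Matrix.mul_one]

lemma aliceOp_add (A A' : Matrix m m ℂ) :
    aliceOp n (A + A') = aliceOp n A + aliceOp n A' := by
  rw [aliceOp, aliceOp, aliceOp, add_kronecker, map_add]

lemma bobOp_add (B B' : Matrix n n ℂ) :
    bobOp m (B + B') = bobOp m B + bobOp m B' := by
  rw [bobOp, bobOp, bobOp, kronecker_add, map_add]

lemma bobOp_sub (B B' : Matrix n n ℂ) :
    bobOp m (B - B') = bobOp m B - bobOp m B' := by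
  rw [bobOp, bobOp, bobOp, kronecker_sub, map_sub]

lemma bobOp_smul (r : ℂ) (B : Matrix n n ℂ) : bobOp m (r • B) = r • bobOp m B := by
  rw [bobOp, bobOp, kronecker_smul, map_smul]

lemma norm_kronecker_intertwining_le {l p : Type*} [Fintype l] [DecidableEq l] [Fintype p]
    [DecidableEq p] {VA : Matrix l m ℂ} {VB : Matrix p n ℂ} (hVA : VAᴴ * VA = 1)
    (hVB : VBᴴ * VB = 1) (A : Matrix m m ℂ) {B : Matrix n n ℂ} (hB : Bᴴ * B = 1)
    {P : Matrix l l ℂ} (hP : Pᴴ * P = 1) (Q : Matrix p p ℂ) (ψ : EuclideanSpace ℂ (m × n)) :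
    ‖toEuclideanLin (VA ⊗ₖ VB) (toEuclideanLin (A ⊗ₖ B) ψ)
        - toEuclideanLin (P ⊗ₖ Q) (toEuclideanLin (VA ⊗ₖ VB) ψ)‖
      ≤ ‖toEuclideanLin ((VA * A - P * VA) ⊗ₖ (1 : Matrix n n ℂ)) ψ‖
        + ‖toEuclideanLin ((1 : Matrix m m ℂ) ⊗ₖ (VB * B - Q * VB)) ψ‖ := by
  rw [← toEuclideanLin_mul_apply, ← toEuclideanLin_mul_apply, ← mul_kronecker_mul,
    ← mul_kronecker_mul]
  exact norm_kronecker_sub_kronecker_le (mul_isometry hP hVA) (mul_isometry hVB hB) ψ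

lemma norm_toEuclideanLin_kronecker_sub_self {A : Matrix m m ℂ} (hA : IsBinaryObservable A)
    (B : Matrix n n ℂ) (ψ : EuclideanSpace ℂ (m × n)) :
    ‖toEuclideanLin (A ⊗ₖ B) ψ - ψ‖ = ‖bobOp m B ψ - aliceOp n A ψ‖ := by
  have hA' := isBinaryObservable_aliceOp (n := n) hA
  rw [toEuclideanLin_kronecker_apply, ← hA'.norm_map (_ - ψ), map_sub, hA'.apply_apply]

lemma norm_stabilizer_sub_le {l p : Type*} [Fintype l] [DecidableEq l] [Fintype p]
    [DecidableEq p] {VA : Matrix l m ℂ} {VB : Matrix p n ℂ} (hVA : VAᴴ * VA = 1)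
    (hVB : VBᴴ * VB = 1) {A : Matrix m m ℂ} (hA : IsBinaryObservable A) {B : Matrix n n ℂ}
    (hB : IsBinaryObservable B) {P : Matrix l l ℂ} (hP : Pᴴ * P = 1) (Q : Matrix p p ℂ)
    (ψ : EuclideanSpace ℂ (m × n)) :
    ‖toEuclideanLin (P ⊗ₖ Q) (toEuclideanLin (VA ⊗ₖ VB) ψ) - toEuclideanLin (VA ⊗ₖ VB) ψ‖
      ≤ ‖toEuclideanLin ((VA * A - P * VA) ⊗ₖ (1 : Matrix n n ℂ)) ψ‖
        + ‖toEuclideanLin ((1 : Matrix m m ℂ) ⊗ₖ (VB * B - Q * VB)) ψ‖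
        + ‖bobOp m B ψ - aliceOp n A ψ‖ := by
  refine (norm_sub_le_norm_sub_add_norm_sub _
    (toEuclideanLin (VA ⊗ₖ VB) (toEuclideanLin (A ⊗ₖ B) ψ)) _).trans (add_le_add ?_ (le_of_eq ?_))
  · rw [norm_sub_rev]
    exact norm_kronecker_intertwining_le hVA hVB A hB.isometry hP Q ψ
  · rw [← map_sub, norm_toEuclideanLin_of_isometry (kronecker_isometry hVA hVB),
      norm_toEuclideanLin_kronecker_sub_self hA]

lemma exists_approxPauliRelations {c s ε : ℝ} (hc : 0 < c) (hs : 0 < s) (hcs : c ^ 2 + s ^ 2 = 1)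
    {M₁ M₂ : Matrix m m ℂ} {N₁ N₂ : Matrix n n ℂ} (hM₁ : IsBinaryObservable M₁)
    (hM₂ : IsBinaryObservable M₂) (hN₁ : IsBinaryObservable N₁) (hN₂ : IsBinaryObservable N₂)
    {ψ : EuclideanSpace ℂ (m × n)} (hψ : ‖ψ‖ = 1)
    (hvalue : 2 - ε * s ≤ (inner ℂ ψ (toEuclideanLin ((c : ℂ) • (M₁ ⊗ₖ N₁) + (c : ℂ) • (M₁ ⊗ₖ N₂)
      + (s : ℂ) • (M₂ ⊗ₖ N₁) - (s : ℂ) • (M₂ ⊗ₖ N₂)) ψ)).re) :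
    ∃ Z X : Matrix n n ℂ, IsBinaryObservable Z ∧ IsBinaryObservable X ∧
      ApproxPauliRelations (aliceOp n M₁) (aliceOp n M₂) (bobOp m N₁) (bobOp m N₂) (bobOp m Z)
        (bobOp m X) c s (√(2 * ε * s) / (c * s)) ψ := by
  open scoped MatrixOrder ComplexOrder in
  have exists_sign {S : Matrix n n ℂ} (hS : IsSelfAdjoint S) :
      ∃ Z, IsBinaryObservable Z ∧ IsSign (bobOp m S) (bobOp m Z) := by
    obtain ⟨Z, hZ⟩ := exists_isSign hS (finite_real_spectrum)
    exact ⟨Z, hZ.isBinaryObservable, hZ.one_kronecker.map (toEuclideanCLM (𝕜 := ℂ))⟩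
  obtain ⟨Z, hZ, hZsign⟩ := exists_sign (hN₁.isSelfAdjoint.add hN₂.isSelfAdjoint)
  obtain ⟨X, hX, hXsign⟩ := exists_sign (hN₁.isSelfAdjoint.sub hN₂.isSelfAdjoint)
  rw [bobOp_add] at hZsign
  rw [bobOp_sub] at hXsign
  simp only [map_add, map_sub, map_smul, LinearMap.add_apply, LinearMap.sub_apply,
    LinearMap.smul_apply, inner_add_right, inner_sub_right, inner_smul_right,
    inner_toEuclideanLin_kronecker hM₁, inner_toEuclideanLin_kronecker hM₂] at hvalue
  have hunit {A : EuclideanSpace ℂ (m × n) →L[ℂ] EuclideanSpace ℂ (m × n)}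
      (hA : IsBinaryObservable A) : ‖A ψ‖ = 1 := (hA.norm_map ψ).trans hψ
  have hA₁ := isBinaryObservable_aliceOp (n := n) hM₁
  have hA₂ := isBinaryObservable_aliceOp (n := n) hM₂
  obtain ⟨h₁, h₂⟩ := norm_tilted_sub_le_sqrt (𝕜 := ℂ) hcs (hunit hA₁) (hunit hA₂)
    (hunit (isBinaryObservable_bobOp hN₁)) (hunit (isBinaryObservable_bobOp hN₂)) hvalue
  rw [← mul_div_cancel₀ √(2 * ε * s) (mul_pos hc hs).ne'] at h₁ h₂
  refine ⟨Z, X, hZ, hX, approxPauliRelations hc hs hcs hA₁ hA₂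
    (isBinaryObservable_bobOp hN₁) hZsign hXsign ?_ h₁ h₂⟩
  rintro A (rfl | rfl) B (rfl | rfl | rfl | rfl) <;> exact commute_aliceOp_bobOp _ _

namespace ApproxPauliRelations

variable {M₁ M₂ : Matrix m m ℂ} {N₁ N₂ Z X : Matrix n n ℂ} {c s η : ℝ}
  {ψ : EuclideanSpace ℂ (m × n)}

lemma norm_alice_intertwining_le
    (h : ApproxPauliRelations (aliceOp n M₁) (aliceOp n M₂) (bobOp m N₁) (bobOp m N₂) (bobOp m Z)
      (bobOp m X) c s η ψ)
    (hM₁ : IsBinaryObservable M₁) (hM₂ : IsBinaryObservable M₂) (x : Fin 3) :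
    ‖toEuclideanLin ((swapIsometry M₁ M₂ * ![1, M₁, M₂] x
        - (idealA x ⊗ₖ (1 : Matrix m m ℂ)) * swapIsometry M₁ M₂) ⊗ₖ (1 : Matrix n n ℂ)) ψ‖
      ≤ 3 * η := by
  have hη : 0 ≤ 3 * η := (norm_nonneg _).trans h.anticommutator_M
  fin_cases x
  · simpa using hη
  · simpa [swapIsometry_mul_left hM₁] using hη
  · refine (norm_swapIsometry_residual_kronecker_one_le M₁ hM₂ ψ).trans ?_
    change ‖aliceOp n (M₁ * M₂ + M₂ * M₁) ψ‖ ≤ _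
    rw [aliceOp_add, aliceOp_mul, aliceOp_mul]
    exact h.anticommutator_M

lemma norm_anticommutator_mul_le
    (h : ApproxPauliRelations (aliceOp n M₁) (aliceOp n M₂) (bobOp m N₁) (bobOp m N₂) (bobOp m Z)
      (bobOp m X) c s η ψ) :
    ‖toEuclideanLin ((1 : Matrix m m ℂ) ⊗ₖ (Z * X + X * Z)) ψ‖ ≤ 11 * η := by
  change ‖bobOp m (Z * X + X * Z) ψ‖ ≤ 11 * η
  rw [bobOp_add, bobOp_mul, bobOp_mul]
  exact h.anticommutator_ZX

lemma norm_bob_intertwining_le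
    (h : ApproxPauliRelations (aliceOp n M₁) (aliceOp n M₂) (bobOp m N₁) (bobOp m N₂) (bobOp m Z)
      (bobOp m X) c s η ψ)
    (hZ : IsBinaryObservable Z) (hX : IsBinaryObservable X) (hs : |s| ≤ 1) (y : Fin 3) :
    ‖toEuclideanLin ((1 : Matrix m m ℂ) ⊗ₖ (swapIsometry Z X * ![1, N₁, N₂] y
        - (idealB c s y ⊗ₖ (1 : Matrix n n ℂ)) * swapIsometry Z X)) ψ‖ ≤ 16 * η := by
  have hη : 0 ≤ 16 * η := by linarith [(norm_nonneg _).trans h.anticommutator_M]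
  have tilted {N : Matrix n n ℂ} {r : ℝ} (hr : |r| ≤ 1)
      (hN : ‖bobOp m (N - ((c : ℂ) • Z + (r : ℂ) • X)) ψ‖ ≤ 5 * η) :
      ‖toEuclideanLin ((1 : Matrix m m ℂ) ⊗ₖ (swapIsometry Z X * N
        - (((c : ℂ) • pauliZ + (r : ℂ) • pauliX) ⊗ₖ (1 : Matrix n n ℂ)) * swapIsometry Z X)) ψ‖
        ≤ 16 * η := by
    refine (norm_one_kronecker_swapIsometry_tilted_le hZ hX N c (by simpa using hr) ψ).trans ?_
    refine (add_le_add hN h.norm_anticommutator_mul_le).trans_eq ?_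
    ring
  fin_cases y
  · simpa using hη
  · refine tilted hs ?_
    rw [bobOp_sub, bobOp_add, bobOp_smul, bobOp_smul]
    exact h.tilted_add
  · have hsub := tilted (N := N₂) (r := -s) (by rwa [abs_neg]) (by
      rw [Complex.ofReal_neg, neg_smul, ← sub_eq_add_neg, bobOp_sub, bobOp_sub, bobOp_smul,
        bobOp_smul]
      exact h.tilted_sub)
    rwa [Complex.ofReal_neg, neg_smul, ← sub_eq_add_neg] at hsub

lemma exists_unit_norm_swap_sub_epr_le
    (h : ApproxPauliRelations (aliceOp n M₁) (aliceOp n M₂) (bobOp m N₁) (bobOp m N₂) (bobOp m Z)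
      (bobOp m X) c s η ψ)
    (hM₁ : IsBinaryObservable M₁) (hM₂ : IsBinaryObservable M₂)
    (hZ : IsBinaryObservable Z) (hX : IsBinaryObservable X) (hψ : ‖ψ‖ = 1) :
    ∃ junk : EuclideanSpace ℂ (m × n), ‖junk‖ = 1 ∧
      ‖toEuclideanLin (swapIsometry M₁ M₂ ⊗ₖ swapIsometry Z X) ψ - tensorVec epr junk‖
        ≤ 18 * η := by
  have hVA := swapIsometry_isometry hM₁ hM₂
  have hVB := swapIsometry_isometry hZ hX
  have hP {P : Matrix (Fin 2) (Fin 2) ℂ} (hP : IsBinaryObservable P) :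
      (P ⊗ₖ (1 : Matrix m m ℂ))ᴴ * (P ⊗ₖ (1 : Matrix m m ℂ)) = 1 :=
    (hP.kronecker .one).isometry
  have hw := (norm_toEuclideanLin_of_isometry (kronecker_isometry hVA hVB) ψ).trans hψ
  obtain ⟨junk, hjunk, hle⟩ := exists_unit_norm_sub_tensorVec_epr_le hw hψ
  refine ⟨junk, hjunk, hle.trans ?_⟩
  have stabilizer_Z := norm_stabilizer_sub_le hVA hVB hM₁ hZ (hP isBinaryObservable_pauliZ)
    (pauliZ ⊗ₖ (1 : Matrix n n ℂ)) ψ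
  have stabilizer_X := norm_stabilizer_sub_le hVA hVB hM₂ hX (hP isBinaryObservable_pauliX)
    (pauliX ⊗ₖ (1 : Matrix n n ℂ)) ψ
  rw [swapIsometry_mul_left hM₁, swapIsometry_mul_left hZ, sub_self, sub_self, zero_kronecker,
    kronecker_zero, map_zero, map_zero, LinearMap.zero_apply, LinearMap.zero_apply, norm_zero,
    norm_zero, zero_add, zero_add] at stabilizer_Z
  have residual_A := h.norm_alice_intertwining_le hM₁ hM₂ 2
  have residual_B := (norm_one_kronecker_swapIsometry_residual_le Z hX ψ).trans
    h.norm_anticommutator_mul_le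
  simp only [idealA, cons_val] at residual_A
  linarith [h.mirror_Z, h.mirror_X]

lemma exists_unit_forall_norm_sub_le
    (h : ApproxPauliRelations (aliceOp n M₁) (aliceOp n M₂) (bobOp m N₁) (bobOp m N₂) (bobOp m Z)
      (bobOp m X) c s η ψ)
    (hcs : c ^ 2 + s ^ 2 = 1) (hM₁ : IsBinaryObservable M₁) (hM₂ : IsBinaryObservable M₂)
    (hN₁ : IsBinaryObservable N₁) (hN₂ : IsBinaryObservable N₂)
    (hZ : IsBinaryObservable Z) (hX : IsBinaryObservable X) (hψ : ‖ψ‖ = 1) :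
    ∃ junk : EuclideanSpace ℂ (m × n), ‖junk‖ = 1 ∧ ∀ x y : Fin 3,
      ‖toEuclideanLin (swapIsometry M₁ M₂ ⊗ₖ swapIsometry Z X)
          (toEuclideanLin (![1, M₁, M₂] x ⊗ₖ ![1, N₁, N₂] y) ψ)
        - tensorVec (toEuclideanLin (idealA x ⊗ₖ idealB c s y) epr) junk‖ ≤ 37 * η := by
  obtain ⟨junk, hjunk, hle⟩ := h.exists_unit_norm_swap_sub_epr_le hM₁ hM₂ hZ hX hψ
  refine ⟨junk, hjunk, fun x y ↦ ?_⟩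
  have hs : |s| ≤ 1 := (sq_le_one_iff_abs_le_one s).1 (by linarith [sq_nonneg c])
  have hP := (isBinaryObservable_idealA x).kronecker (.one (R := Matrix m m ℂ))
  have hQ := (isBinaryObservable_idealB hcs y).kronecker (.one (R := Matrix n n ℂ))
  rw [← toEuclideanLin_local_tensorVec]
  have intertwining := norm_kronecker_intertwining_le (swapIsometry_isometry hM₁ hM₂)
    (swapIsometry_isometry hZ hX) (![1, M₁, M₂] x) (isBinaryObservable_cons hN₁ hN₂ y).isometry
    hP.isometry (idealB c s y ⊗ₖ (1 : Matrix n n ℂ)) ψ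
  have ideal := norm_toEuclideanLin_of_isometry (hP.kronecker hQ).isometry
    (toEuclideanLin (swapIsometry M₁ M₂ ⊗ₖ swapIsometry Z X) ψ - tensorVec epr junk)
  rw [map_sub] at ideal
  refine (norm_sub_le_norm_sub_add_norm_sub _ _ _).trans
    (add_le_add intertwining (ideal.trans_le hle) |>.trans ?_)
  linarith [h.norm_alice_intertwining_le hM₁ hM₂ x, h.norm_bob_intertwining_le hZ hX hs y]

end ApproxPauliRelations

end Robustness

section Angle

lemma sin_arctan_one_div_mul {α : ℝ} (hα : α ≠ 0) :
    Real.sin (Real.arctan (1 / α)) * α = Real.cos (Real.arctan (1 / α)) := by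
  have htan := Real.tan_arctan (1 / α)
  rwa [Real.tan_eq_sin_div_cos, div_eq_div_iff (Real.cos_arctan_pos _).ne' hα, one_mul] at htan

lemma sin_mul_sqrt_one_add_sq {α θ : ℝ} (hsin : 0 ≤ Real.sin θ)
    (hcos : Real.sin θ * α = Real.cos θ) : Real.sin θ * √(1 + α ^ 2) = 1 := by
  have hsq : Real.sin θ ^ 2 * (1 + α ^ 2) = 1 := by
    rw [mul_add, mul_one, ← mul_pow, hcos, Real.sin_sq_add_cos_sq]
  rw [← Real.sqrt_sq hsin, ← Real.sqrt_mul (sq_nonneg _), hsq, Real.sqrt_one]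

lemma sqrt_two_mul_div_le {c s : ℝ} (hc : 0 < c) (hs : 0 < s) (ε : ℝ) :
    37 * (√(2 * ε * s) / (c * s)) ≤ 53 * (√ε / (c * √s)) := by
  have hsqrt_two : 37 * √2 ≤ 53 := by
    nlinarith [Real.sq_sqrt zero_le_two, Real.sqrt_nonneg 2]
  have split : √(2 * ε * s) / (c * s) = √2 * (√ε / (c * √s)) := by
    rw [Real.sqrt_mul' _ hs.le, Real.sqrt_mul zero_le_two, mul_div_mul_comm, Real.sqrt_div_self']
    ring
  rw [split, ← mul_assoc]
  exact mul_le_mul_of_nonneg_right hsqrt_two (by positivity)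

lemma sqrt_div_mul_sqrt_le {c s : ℝ} (hc : 0 < c) (hc₁ : c ≤ 1) (hs : 0 < s) (ε : ℝ) :
    √ε / (c * √s) ≤ (1 / (c ^ 2 * s ^ ((1 : ℝ) / 2)) + 1 / s ^ ((3 : ℝ) / 2)) * √ε := by
  rw [← Real.sqrt_eq_rpow, div_eq_inv_mul, ← one_div]
  have hle : 1 / (c * √s) ≤ 1 / (c ^ 2 * √s) := by
    gcongr
    nlinarith
  have hpos : 0 ≤ 1 / s ^ ((3 : ℝ) / 2) := by positivity
  exact mul_le_mul_of_nonneg_right (by linarith) (Real.sqrt_nonneg ε)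

end Angle

lemma two_sub_mul_le_re_inner {m n : Type*} [Fintype m] [DecidableEq m] [Fintype n] [DecidableEq n]
    {α θ ε : ℝ} (hsin : 0 < Real.sin θ) (hcos : Real.sin θ * α = Real.cos θ)
    {M₁ M₂ : Matrix m m ℂ} {N₁ N₂ : Matrix n n ℂ} {ψ : EuclideanSpace ℂ (m × n)}
    (hvalue : 2 * √(1 + α ^ 2) - ε ≤ (inner ℂ ψ (toEuclideanLin ((α : ℂ) • (M₁ ⊗ₖ N₁)
      + (α : ℂ) • (M₁ ⊗ₖ N₂) + M₂ ⊗ₖ N₁ - M₂ ⊗ₖ N₂) ψ)).re) :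
    2 - ε * Real.sin θ ≤ (inner ℂ ψ (toEuclideanLin ((Real.cos θ : ℂ) • (M₁ ⊗ₖ N₁)
      + (Real.cos θ : ℂ) • (M₁ ⊗ₖ N₂) + (Real.sin θ : ℂ) • (M₂ ⊗ₖ N₁)
      - (Real.sin θ : ℂ) • (M₂ ⊗ₖ N₂)) ψ)).re := by
  have scale : (Real.cos θ : ℂ) • (M₁ ⊗ₖ N₁) + (Real.cos θ : ℂ) • (M₁ ⊗ₖ N₂)
      + (Real.sin θ : ℂ) • (M₂ ⊗ₖ N₁) - (Real.sin θ : ℂ) • (M₂ ⊗ₖ N₂)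
      = (Real.sin θ : ℂ) • ((α : ℂ) • (M₁ ⊗ₖ N₁) + (α : ℂ) • (M₁ ⊗ₖ N₂)
        + M₂ ⊗ₖ N₁ - M₂ ⊗ₖ N₂) := by
    rw [← hcos, Complex.ofReal_mul]
    module
  rw [scale, map_smul, LinearMap.smul_apply, inner_smul_right, Complex.re_ofReal_mul]
  refine (mul_le_mul_of_nonneg_left hvalue hsin.le).trans' (le_of_eq ?_)
  linear_combination -2 * sin_mul_sqrt_one_add_sq hsin.le hcos

end WeightedCHSH

open WeightedCHSH in
theorem stmt_16_general {α μ ε : ℝ} (hα : 0 < α) (hμ : μ = Real.arctan (1 / α)) {m n : Type*}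
    [Fintype m] [DecidableEq m] [Fintype n] [DecidableEq n] {M₁ M₂ : Matrix m m ℂ}
    {N₁ N₂ : Matrix n n ℂ} (hM₁ : IsBinaryObservable M₁) (hM₂ : IsBinaryObservable M₂)
    (hN₁ : IsBinaryObservable N₁) (hN₂ : IsBinaryObservable N₂) {ψ : EuclideanSpace ℂ (m × n)}
    (hψ : ‖ψ‖ = 1)
    (hvalue : 2 * √(1 + α ^ 2) - ε ≤ (inner ℂ ψ (toEuclideanLin ((α : ℂ) • (M₁ ⊗ₖ N₁)
      + (α : ℂ) • (M₁ ⊗ₖ N₂) + M₂ ⊗ₖ N₁ - M₂ ⊗ₖ N₂) ψ)).re) :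
    ∃ (VA : Matrix (Fin 2 × m) m ℂ) (VB : Matrix (Fin 2 × n) n ℂ)
      (junk : EuclideanSpace ℂ (m × n)), VAᴴ * VA = 1 ∧ VBᴴ * VB = 1 ∧ ‖junk‖ = 1 ∧
      ∀ x y : Fin 3, ‖toEuclideanLin (VA ⊗ₖ VB)
          (toEuclideanLin (![1, M₁, M₂] x ⊗ₖ ![1, N₁, N₂] y) ψ)
        - tensorVec (toEuclideanLin (idealA x ⊗ₖ idealB (Real.cos μ) (Real.sin μ) y) epr) junk‖
        ≤ 53 * (√ε / (Real.cos μ * √(Real.sin μ))) := by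
  have hcos : 0 < Real.cos μ := hμ ▸ Real.cos_arctan_pos _
  have hsin : 0 < Real.sin μ := hμ ▸ Real.sin_arctan_pos.2 (one_div_pos.2 hα)
  have hcs := Real.cos_sq_add_sin_sq μ
  obtain ⟨Z, X, hZ, hX, h⟩ := exists_approxPauliRelations hcos hsin hcs hM₁ hM₂ hN₁ hN₂ hψ
    (two_sub_mul_le_re_inner hsin (hμ ▸ sin_arctan_one_div_mul hα.ne') hvalue)
  obtain ⟨junk, hjunk, hle⟩ := h.exists_unit_forall_norm_sub_le hcs hM₁ hM₂ hN₁ hN₂ hZ hX hψ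
  exact ⟨swapIsometry M₁ M₂, swapIsometry Z X, junk, swapIsometry_isometry hM₁ hM₂,
    swapIsometry_isometry hZ hX, hjunk,
    fun x y ↦ (hle x y).trans (sqrt_two_mul_div_le hcos hsin ε)⟩

/-- Robust self-testing of the weighted CHSH inequality.
`H_A = ℂ^{nA}`, `H_B = ℂ^{nB}`, `K_A = ℂ^{kA}`, `K_B = ℂ^{kB}`; tensor products of spaces
are realized by product index types and tensor products of operators by Kronecker products.
The isometries `V_A : H_A → ℂ² ⊗ K_A`, `V_B : H_B → ℂ² ⊗ K_B` are matrices `VA`, `VB` with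
`VAᴴ * VA = 1`, `VBᴴ * VB = 1`.  The vector `((M̃_x ⊗ Ñ_y)|EPR⟩) ⊗ junk`, viewed in
`(ℂ² ⊗ K_A) ⊗ (ℂ² ⊗ K_B)`, has components
`((M̃_x ⊗ Ñ_y)EPR)(i,j) * junk(a,b)` at index `((i,a),(j,b))`. -/
theorem stmt_16 :
    ∃ K : ℝ, 0 < K ∧
      ∀ (α : ℝ), 0 < α → ∀ (μ : ℝ), μ = Real.arctan (1 / α) →
      ∀ (ε : ℝ), 0 ≤ ε →
      ∀ (nA nB : ℕ)
        (M₁ M₂ : Matrix (Fin nA) (Fin nA) ℂ)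
        (N₁ N₂ : Matrix (Fin nB) (Fin nB) ℂ),
        M₁.IsHermitian → M₁ * M₁ = 1 → M₂.IsHermitian → M₂ * M₂ = 1 →
        N₁.IsHermitian → N₁ * N₁ = 1 → N₂.IsHermitian → N₂ * N₂ = 1 →
      ∀ (ψ : EuclideanSpace ℂ (Fin nA × Fin nB)), ‖ψ‖ = 1 →
        2 * Real.sqrt (1 + α ^ 2) - ε ≤
          (inner ℂ ψ (mApply ((α : ℂ) • (M₁ ⊗ₖ N₁) + (α : ℂ) • (M₁ ⊗ₖ N₂) +
            M₂ ⊗ₖ N₁ - M₂ ⊗ₖ N₂) ψ) : ℂ).re →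
      ∃ (kA kB : ℕ)
        (VA : Matrix (Fin 2 × Fin kA) (Fin nA) ℂ)
        (VB : Matrix (Fin 2 × Fin kB) (Fin nB) ℂ)
        (junk : EuclideanSpace ℂ (Fin kA × Fin kB)),
        VAᴴ * VA = 1 ∧ VBᴴ * VB = 1 ∧ ‖junk‖ = 1 ∧
        ∀ x y : Fin 3,
          ‖mApply (VA ⊗ₖ VB) (mApply ((![1, M₁, M₂] x) ⊗ₖ (![1, N₁, N₂] y)) ψ) -
            (WithLp.equiv 2 ((Fin 2 × Fin kA) × (Fin 2 × Fin kB) → ℂ)).symm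
              (fun p => ((![1, !![1, 0; 0, -1], !![0, 1; 1, 0]] x ⊗ₖ
                  ![1, (Real.cos μ : ℂ) • !![1, 0; 0, -1] + (Real.sin μ : ℂ) • !![0, 1; 1, 0],
                      (Real.cos μ : ℂ) • !![1, 0; 0, -1] - (Real.sin μ : ℂ) • !![0, 1; 1, 0]] y).mulVec
                    (fun q : Fin 2 × Fin 2 => if q.1 = q.2 then ((Real.sqrt 2 : ℂ))⁻¹ else 0))
                  (p.1.1, p.2.1) *
                (WithLp.equiv 2 (Fin kA × Fin kB → ℂ)) junk (p.1.2, p.2.2))‖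
          ≤ K * (1 / (Real.cos μ ^ 2 * Real.sin μ ^ ((1 : ℝ) / 2)) +
              1 / Real.sin μ ^ ((3 : ℝ) / 2)) * Real.sqrt ε := by
  refine ⟨53, by norm_num, ?_⟩
  intro α hα μ hμ ε _ nA nB M₁ M₂ N₁ N₂ hM₁ hM₁' hM₂ hM₂' hN₁ hN₁' hN₂ hN₂' ψ hψ hvalue
  obtain ⟨VA, VB, junk, hVA, hVB, hjunk, hle⟩ := stmt_16_general hα hμ ⟨hM₁, hM₁'⟩ ⟨hM₂, hM₂'⟩
    ⟨hN₁, hN₁'⟩ ⟨hN₂, hN₂'⟩ hψ hvalue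
  have hcos : 0 < Real.cos μ := hμ ▸ Real.cos_arctan_pos _
  have hsin : 0 < Real.sin μ := hμ ▸ Real.sin_arctan_pos.2 (one_div_pos.2 hα)
  refine ⟨nA, nB, VA, VB, junk, hVA, hVB, hjunk, fun x y ↦ (hle x y).trans ?_⟩
  rw [mul_assoc]
  exact mul_le_mul_of_nonneg_left
    (WeightedCHSH.sqrt_div_mul_sqrt_le hcos (Real.cos_le_one μ) hsin ε) (by norm_num)
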